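/- arXiv:1603.07789 — 3 statements merged into one kernel-verified Lean document; each statement's English description precedes it below -/
import Mathlib

section
/- Let T > 0, let (Ω, F, P) be a probability space with a filtration (F_t)_{t∈[0,T]}, let 1 < ν ≤ q̄ < ∞, and set μ = ν/(ν−1) and p̄ = q̄/(q̄−1). Let φ : [0,T] × Ω → ℝ^m be jointly measurable with E[(∫₀^T |φ(t)|^ν dt)^{q̄/ν}] < ∞. Let M : [0,T] × Ω → [0,∞) be an adapted, jointly measurable process with right-continuous sample paths such that for each t ∈ [0,T], M(t) is a version of the conditional expectation E[ (∫₀^T |φ(s)|^ν ds)^{(q̄−ν)/ν} · 1_{{∫₀^T |φ(s)|^ν ds ≠ 0}} | F_t ]. Then E[(∫₀^T (M(t)·|φ(t)|^{ν−1})^μ dt)^{p̄/μ}] ≤ (q̄/ν)^{q̄/(q̄−1)} · E[(∫₀^T |φ(t)|^ν dt)^{q̄/ν}] < ∞. In particular, the process t ↦ M(t)|φ(t)|^{ν−2}φ(t) belongs to L^{p̄}(Ω; L^{μ}(0,T; ℝ^m)). -/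
open MeasureTheory ENNReal

/-- Euclidean norm on `Fin k → ℝ`. -/
noncomputable def eucNorm {k : ℕ} (v : Fin k → ℝ) : ℝ := Real.sqrt (∑ i, v i ^ 2)


theorem aux_doob_Lr {Ω : Type*} {m0 : MeasurableSpace Ω} (P : Measure Ω)
    [IsProbabilityMeasure P] (X : Ω → ℝ) (hX : Measurable X) (hX0 : ∀ ω, 0 ≤ X ω) (K : ℝ)
    (hXK : ∀ ω, X ω ≤ K) (ξ : Ω → ℝ≥0∞) (hξ : Measurable ξ) (r : ℝ) (hr : 1 < r)
    (h : ∀ ε : ℝ, 0 < ε → ENNReal.ofReal ε * P {ω | ε ≤ X ω} ≤ ∫⁻ ω in {ω | ε ≤ X ω}, ξ ω ∂P) :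
    ∫⁻ ω, ENNReal.ofReal (X ω) ^ r ∂P ≤ ENNReal.ofReal (r / (r - 1)) ^ r * ∫⁻ ω, ξ ω ^ r ∂P := by
  have hr0 : 0 < r := by linarith
  have hr1 : 0 < r - 1 := by linarith
  set Q := P.withDensity ξ
  have e1 : ∫⁻ ω, ENNReal.ofReal (X ω) ^ r ∂P = ∫⁻ ω, ENNReal.ofReal (X ω ^ r) ∂P :=
    lintegral_congr fun ω => ENNReal.ofReal_rpow_of_nonneg (hX0 ω) hr0.le
  have e2 := lintegral_rpow_eq_lintegral_meas_le_mul (μ := P) (Filter.Eventually.of_forall hX0)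
    hX.aemeasurable hr0
  have e3 := lintegral_rpow_eq_lintegral_meas_le_mul (μ := Q) (Filter.Eventually.of_forall hX0)
    hX.aemeasurable hr1
  have e4 : ∫⁻ t in Set.Ioi (0:ℝ), P {a | t ≤ X a} * ENNReal.ofReal (t ^ (r - 1)) ≤
      ∫⁻ t in Set.Ioi (0:ℝ), Q {a | t ≤ X a} * ENNReal.ofReal (t ^ (r - 1 - 1)) := by
    refine setLIntegral_mono' measurableSet_Ioi fun t ht => ?_
    have ht : 0 < t := ht
    have : t ^ (r - 1) = t * t ^ (r - 1 - 1) := by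
      rw [Real.rpow_sub_one ht.ne' (r-1)]; field_simp
    rw [this, ENNReal.ofReal_mul ht.le, ← mul_assoc, mul_comm (P _)]
    gcongr
    rw [withDensity_apply _ (measurableSet_le measurable_const hX)]
    exact h t ht
  have e5 : ∫⁻ ω, ENNReal.ofReal (X ω ^ (r - 1)) ∂Q
      = ∫⁻ ω, (ξ * fun ω => ENNReal.ofReal (X ω) ^ (r - 1)) ω ∂P := by
    rw [← lintegral_withDensity_eq_lintegral_mul P hξ (by fun_prop)]
    exact lintegral_congr fun ω => (ENNReal.ofReal_rpow_of_nonneg (hX0 ω) hr1.le).symm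
  have hc : r.HolderConjugate (r / (r - 1)) := Real.HolderConjugate.conjExponent hr
  have e6 := ENNReal.lintegral_mul_le_Lp_mul_Lq P hc hξ.aemeasurable
    (g := fun ω => ENNReal.ofReal (X ω) ^ (r - 1)) (by fun_prop)
  have e7 : ∀ ω, (ENNReal.ofReal (X ω) ^ (r - 1)) ^ (r / (r - 1)) = ENNReal.ofReal (X ω) ^ r := by
    intro ω
    rw [← ENNReal.rpow_mul]; congr 1; field_simp
  simp_rw [e7] at e6
  set A := ∫⁻ ω, ENNReal.ofReal (X ω) ^ r ∂P with hA
  set B := ∫⁻ ω, ξ ω ^ r ∂P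
  have hAtop : A ≠ ⊤ := by
    have : A ≤ ∫⁻ ω, ENNReal.ofReal K ^ r ∂P := by
      refine lintegral_mono fun ω => ?_
      dsimp only
      gcongr
      exact hXK ω
    refine (this.trans_lt ?_).ne
    simp [ENNReal.rpow_lt_top_of_nonneg hr0.le]
  have key : A ≤ ENNReal.ofReal (r / (r - 1)) * (B ^ (1 / r) * A ^ (1 / (r / (r - 1)))) := by
    calc A = ENNReal.ofReal r * ∫⁻ t in Set.Ioi (0:ℝ), P {a | t ≤ X a} * ENNReal.ofReal (t ^ (r - 1)) := by
          rw [e1, e2]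
      _ ≤ ENNReal.ofReal r * ∫⁻ t in Set.Ioi (0:ℝ), Q {a | t ≤ X a} * ENNReal.ofReal (t ^ (r - 1 - 1)) := by
          gcongr
      _ = ENNReal.ofReal (r / (r - 1)) * ∫⁻ ω, ENNReal.ofReal (X ω ^ (r - 1)) ∂Q := by
          rw [e3, ← mul_assoc, ← ENNReal.ofReal_mul (by positivity)]
          congr 2; field_simp
      _ ≤ _ := by
          rw [e5]; gcongr
  by_cases hA0 : A = 0
  · rw [hA0]; exact zero_le
  have hsplit : A = A ^ (1 / r) * A ^ (1 / (r / (r - 1))) := by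
    rw [← ENNReal.rpow_add _ _ hA0 hAtop]
    rw [show 1 / r + 1 / (r / (r-1)) = 1 by field_simp; ring, ENNReal.rpow_one]
  have hne0 : A ^ (1 / (r / (r - 1))) ≠ 0 := by
    simp [ENNReal.rpow_eq_zero_iff, hA0, hAtop]
  have hnet : A ^ (1 / (r / (r - 1))) ≠ ⊤ := ENNReal.rpow_ne_top_of_nonneg (by positivity) hAtop
  have k2 : A ^ (1 / r) ≤ ENNReal.ofReal (r / (r - 1)) * B ^ (1 / r) := by
    rw [← ENNReal.mul_le_mul_iff_left hne0 hnet, ← hsplit, mul_assoc]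
    exact key
  calc A = (A ^ (1 / r)) ^ r := by rw [← ENNReal.rpow_mul]; simp [hr0.ne']
    _ ≤ (ENNReal.ofReal (r / (r - 1)) * B ^ (1 / r)) ^ r := by gcongr
    _ = _ := by rw [ENNReal.mul_rpow_of_nonneg _ _ hr0.le, ← ENNReal.rpow_mul]; simp [hr0.ne']

theorem aux_max {Ω : Type*} {m0 : MeasurableSpace Ω} (P : Measure Ω)
    [IsProbabilityMeasure P] (ℱ : Filtration ℝ m0) (T : ℝ) (hT : 0 < T)
    (ξ : Ω → ℝ) (hξ0 : ∀ ω, 0 ≤ ξ ω) (hξi : Integrable ξ P)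
    (M : ℝ → Ω → ℝ) (hMnn : ∀ t ω, 0 ≤ M t ω) (hMadapted : Adapted ℱ M)
    (hMcond : ∀ t ∈ Set.Icc (0 : ℝ) T, (fun ω => M t ω) =ᵐ[P] P[ξ | ℱ t])
    (N : ℕ) (ε : ℝ) (hε : 0 < ε) :
    ENNReal.ofReal ε * P {ω | ε ≤ (Finset.range (N + 1)).sup' Finset.nonempty_range_add_one
        fun k => M (T * (min k N : ℕ) / N) ω} ≤
    ∫⁻ ω in {ω | ε ≤ (Finset.range (N + 1)).sup' Finset.nonempty_range_add_one
        fun k => M (T * (min k N : ℕ) / N) ω}, ENNReal.ofReal (ξ ω) ∂P := by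
  let τ : ℕ → ℝ := fun k => T * (min k N : ℕ) / N
  have hτm : Monotone τ := by
    intro i j hij
    simp only [τ]
    gcongr
  have hτ : ∀ k, τ k ∈ Set.Icc 0 T := by
    intro k
    refine ⟨by positivity, ?_⟩
    simp only [τ]
    rw [mul_div_assoc]
    refine mul_le_of_le_one_right hT.le (div_le_one_of_le₀ ?_ (by positivity))
    exact_mod_cast min_le_right _ _
  let 𝒢 : Filtration ℕ m0 := ⟨fun k => ℱ (τ k), fun i j hij => ℱ.mono (hτm hij), fun k => ℱ.le _⟩
  let f : ℕ → Ω → ℝ := fun k => M (τ k)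
  have hf : ∀ k, f k =ᵐ[P] P[ξ | ℱ (τ k)] := fun k => hMcond _ (hτ k)
  have hmart : Martingale f 𝒢 P := by
    refine ⟨fun k => (hMadapted (τ k)).stronglyMeasurable, fun i j hij => ?_⟩
    refine (condExp_congr_ae (hf j)).trans ?_
    refine (condExp_condExp_of_le (𝒢.mono hij) (𝒢.le j)).trans (hf i).symm
  have hmax := maximal_ineq hmart.submartingale (fun k ω => hMnn _ _) (ε := ε.toNNReal) N
  rw [Real.coe_toNNReal _ hε.le] at hmax
  have hmeas : MeasurableSet[𝒢 N] {ω | ε ≤ (Finset.range (N + 1)).sup' Finset.nonempty_range_add_one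
        fun k => f k ω} := by
    refine @measurableSet_le _ _ _ _ _ (𝒢 N) _ _ _ _ _ measurable_const ?_
    exact @Finset.measurable_range_sup'' _ _ _ (𝒢 N) _ _ _ _ fun k hk =>
      (hMadapted (τ k)).mono (ℱ.mono (hτm hk)) le_rfl
  refine hmax.trans ?_
  rw [setIntegral_congr_ae (g := P[ξ | ℱ (τ N)]) (𝒢.le N _ hmeas) ((hf N).mono fun _ h _ => h)]
  rw [setIntegral_condExp (ℱ.le _) hξi hmeas, ofReal_integral_eq_lintegral_ofReal hξi.integrableOn
    (Filter.Eventually.of_forall hξ0)]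

theorem aux_Z {Ω : Type*} {m0 : MeasurableSpace Ω} (P : Measure Ω)
    [IsProbabilityMeasure P] (ℱ : Filtration ℝ m0) (T : ℝ) (hT : 0 < T)
    (ξ : Ω → ℝ) (hξ0 : ∀ ω, 0 ≤ ξ ω) (hξm : Measurable ξ) (hξi : Integrable ξ P)
    (M : ℝ → Ω → ℝ) (hMnn : ∀ t ω, 0 ≤ M t ω) (hMadapted : Adapted ℱ M)
    (hMrc : ∀ ω t, ContinuousWithinAt (fun s => M s ω) (Set.Ici t) t)
    (hMcond : ∀ t ∈ Set.Icc (0 : ℝ) T, (fun ω => M t ω) =ᵐ[P] P[ξ | ℱ t]) :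
    ∃ Z : Ω → ℝ≥0∞, Measurable Z ∧ (∀ ω, ∀ t ∈ Set.Ioc 0 T, ENNReal.ofReal (M t ω) ≤ Z ω) ∧
      (∀ r : ℝ, 1 < r → ∫⁻ ω, Z ω ^ r ∂P ≤
        ENNReal.ofReal (r / (r - 1)) ^ r * ∫⁻ ω, ENNReal.ofReal (ξ ω) ^ r ∂P) ∧
      ((∀ ω, ξ ω ≤ 1) → ∀ᵐ ω ∂P, Z ω ≤ 1) := by
  let S : ℕ → Ω → ℝ := fun n ω => (Finset.range (n + 1)).sup' Finset.nonempty_range_add_one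
        fun k => M (T * (min k n : ℕ) / n) ω
  let X : ℕ → Ω → ℝ := fun n ω => min (S n ω) n
  have hSm : ∀ n, Measurable (S n) := fun n =>
    Finset.measurable_range_sup'' fun k _ => hMadapted.measurable
  have hS0 : ∀ n ω, 0 ≤ S n ω := fun n ω =>
    (hMnn _ _).trans (Finset.le_sup' (fun k => M (T * (min k n : ℕ) / n) ω)
      (Finset.mem_range.2 (Nat.succ_pos n)))
  have hXm : ∀ n, Measurable (X n) := fun n => (hSm n).min measurable_const
  have hX0 : ∀ n ω, 0 ≤ X n ω := fun n ω => le_min (hS0 n ω) (by positivity)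
  have hZr : ∀ r : ℝ, 0 < r → ∀ ω, (Filter.liminf (fun n => ENNReal.ofReal (X n ω)) Filter.atTop) ^ r
      = Filter.liminf (fun n => ENNReal.ofReal (X n ω) ^ r) Filter.atTop := by
    intro r hr ω
    exact (ENNReal.orderIsoRpow r hr).liminf_apply
  refine ⟨fun ω => Filter.liminf (fun n => ENNReal.ofReal (X n ω)) Filter.atTop,
    Measurable.liminf fun n => (hXm n).ennreal_ofReal, ?_, ?_, ?_⟩
  · intro ω t ht
    let s : ℕ → ℝ := fun n => T * (⌈(t / T) * n⌉₊ : ℝ) / n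
    have hs1 : Filter.Tendsto s Filter.atTop (nhds t) := by
      have := ((tendsto_nat_ceil_mul_div_atTop (R := ℝ) (a := t / T)
        (div_nonneg ht.1.le hT.le)).comp tendsto_natCast_atTop_atTop).const_mul T
      rw [show T * (t / T) = t by field_simp] at this
      refine this.congr fun n => ?_
      simp [s, mul_div_assoc]
    have hs2 : ∀ᶠ n in Filter.atTop, s n ∈ Set.Ici t := by
      filter_upwards [Filter.eventually_gt_atTop 0] with n hn
      have hn' : (0:ℝ) < n := by exact_mod_cast hn
      have := Nat.le_ceil (t / T * (n:ℝ))
      simp only [s, Set.mem_Ici]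
      rw [le_div_iff₀ hn']
      calc t * n = T * (t / T * n) := by field_simp
        _ ≤ _ := by gcongr
    have hs3 : Filter.Tendsto (fun n => M (s n) ω) Filter.atTop (nhds (M t ω)) :=
      (hMrc ω t).tendsto.comp (tendsto_nhdsWithin_iff.2 ⟨hs1, hs2⟩)
    have hs4 := (ENNReal.continuous_ofReal.tendsto _).comp hs3
    rw [← hs4.liminf_eq]
    refine Filter.liminf_le_liminf ?_
    have ev1 : ∀ᶠ n in Filter.atTop, M (s n) ω < M t ω + 1 := hs3.eventually_lt_const (by linarith)
    have ev2 : ∀ᶠ n : ℕ in Filter.atTop, M t ω + 1 ≤ n :=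
      tendsto_natCast_atTop_atTop.eventually_ge_atTop _
    filter_upwards [ev1, ev2] with n h1 h2
    refine ENNReal.ofReal_le_ofReal (le_min ?_ (h1.le.trans h2))
    have hle : ⌈(t / T) * n⌉₊ ≤ n := by
      refine Nat.ceil_le.2 (mul_le_of_le_one_left (by positivity) ((div_le_one hT).2 ht.2))
    have := Finset.le_sup' (fun k => M (T * (min k n : ℕ) / n) ω)
      (Finset.mem_range.2 (Nat.lt_succ_of_le hle))
    simpa only [min_eq_left hle] using this
  · intro r hr
    simp_rw [hZr r (by linarith)]
    refine (lintegral_liminf_le fun n => by have := hXm n; fun_prop).trans ?_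
    refine Filter.liminf_le_of_le (by isBoundedDefault) fun b hb => ?_
    obtain ⟨n, hn⟩ := hb.exists
    refine hn.trans ?_
    refine aux_doob_Lr P (X n) (hXm n) (hX0 n) n (fun ω => min_le_right _ _)
      (fun ω => ENNReal.ofReal (ξ ω)) hξm.ennreal_ofReal r hr fun ε hε => ?_
    by_cases hεn : ε ≤ n
    · have : {ω | ε ≤ X n ω} = {ω | ε ≤ S n ω} := by
        ext ω; simp [X, hεn]
      rw [this]
      exact aux_max P ℱ T hT ξ hξ0 hξi M hMnn hMadapted hMcond n ε hε
    · have : {ω | ε ≤ X n ω} = ∅ := by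
        ext ω; simp [X, hεn]
      rw [this]; simp
  · intro h1
    have hM1 : ∀ t ∈ Set.Icc 0 T, ∀ᵐ ω ∂P, M t ω ≤ 1 := by
      intro t ht
      have := condExp_mono (m := ℱ t) hξi (integrable_const (1:ℝ)) (Filter.Eventually.of_forall h1)
      rw [condExp_const (ℱ.le t)] at this
      filter_upwards [this, hMcond t ht] with ω h2 h3
      rw [h3]; exact h2
    have hτ : ∀ n k : ℕ, T * (min k n : ℕ) / n ∈ Set.Icc 0 T := by
      intro n k
      refine ⟨by positivity, ?_⟩
      rw [mul_div_assoc]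
      refine mul_le_of_le_one_right hT.le (div_le_one_of_le₀ ?_ (by positivity))
      exact_mod_cast min_le_right _ _
    have : ∀ᵐ ω ∂P, ∀ n k : ℕ, M (T * (min k n : ℕ) / n) ω ≤ 1 :=
      ae_all_iff.2 fun n => ae_all_iff.2 fun k => hM1 _ (hτ n k)
    filter_upwards [this] with ω hω
    refine Filter.liminf_le_of_le (by isBoundedDefault) fun b hb => ?_
    obtain ⟨n, hn⟩ := hb.exists
    refine hn.trans ?_
    rw [ENNReal.ofReal_le_one]
    refine (min_le_left _ _).trans (Finset.sup'_le _ _ fun k _ => hω n k)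

/-- Lemma 4.6 of the paper. Let `1 < ν ≤ q̄ < ∞`, `μ = ν/(ν−1)`,
`p̄ = q̄/(q̄−1)`, let `φ` be jointly measurable with
`E[(∫₀^T |φ(t)|^ν dt)^{q̄/ν}] < ∞`, and let `M` be an adapted, jointly measurable,
right-continuous nonnegative process such that for each `t ∈ [0,T]`, `M(t)` is a version
of `E[(∫₀^T |φ(s)|^ν ds)^{(q̄−ν)/ν} 1_{∫₀^T |φ(s)|^ν ds ≠ 0} | F_t]`. Then
`E[(∫₀^T (M(t)|φ(t)|^{ν−1})^μ dt)^{p̄/μ}] ≤ (q̄/ν)^{q̄/(q̄−1)} E[(∫₀^T |φ(t)|^ν dt)^{q̄/ν}] < ∞`;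
in particular `t ↦ M(t)|φ(t)|^{ν−2}φ(t)` belongs to `L^{p̄}(Ω; L^{μ}(0,T;ℝ^m))`. -/
theorem stmt_8 {m : ℕ} {Ω : Type*} {m0 : MeasurableSpace Ω} (P : Measure Ω)
    [IsProbabilityMeasure P] (ℱ : Filtration ℝ m0)
    (T : ℝ) (hT : 0 < T) (ν qb μ pb : ℝ) (hν : 1 < ν) (hνq : ν ≤ qb)
    (hμ : μ = ν / (ν - 1)) (hpb : pb = qb / (qb - 1))
    (φ : ℝ × Ω → Fin m → ℝ) (hφmeas : Measurable φ)
    (hφint : ∫⁻ ω, (∫⁻ t in Set.Ioc 0 T,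
        ENNReal.ofReal (eucNorm (φ (t, ω))) ^ ν) ^ (qb / ν) ∂P < ⊤)
    (M : ℝ → Ω → ℝ) (hMnn : ∀ t ω, 0 ≤ M t ω)
    (hMadapted : Adapted ℱ M)
    (hMmeas : Measurable (fun q : ℝ × Ω => M q.1 q.2))
    (hMrc : ∀ ω t, ContinuousWithinAt (fun s => M s ω) (Set.Ici t) t)
    (hMcond : ∀ t ∈ Set.Icc (0 : ℝ) T, (fun ω => M t ω) =ᵐ[P]
      P[fun ω => if (∫ s in Set.Ioc 0 T, eucNorm (φ (s, ω)) ^ ν) = 0 then 0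
          else (∫ s in Set.Ioc 0 T, eucNorm (φ (s, ω)) ^ ν) ^ ((qb - ν) / ν) | ℱ t]) :
    ∫⁻ ω, (∫⁻ t in Set.Ioc 0 T,
        ENNReal.ofReal (M t ω * eucNorm (φ (t, ω)) ^ (ν - 1)) ^ μ) ^ (pb / μ) ∂P
      ≤ ENNReal.ofReal ((qb / ν) ^ (qb / (qb - 1))) *
          ∫⁻ ω, (∫⁻ t in Set.Ioc 0 T,
            ENNReal.ofReal (eucNorm (φ (t, ω))) ^ ν) ^ (qb / ν) ∂P
    ∧ ∫⁻ ω, (∫⁻ t in Set.Ioc 0 T,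
        ENNReal.ofReal (M t ω * eucNorm (φ (t, ω)) ^ (ν - 1)) ^ μ) ^ (pb / μ) ∂P < ⊤ := by
  have hq0 : 0 < qb := by linarith
  have hν0 : 0 < ν := by linarith
  have hν1 : 0 < ν - 1 := by linarith
  have hq1 : 0 < qb - 1 := by linarith
  have hμ0 : 0 < μ := by rw [hμ]; positivity
  have hpb0 : 0 < pb := by rw [hpb]; positivity
  have hg0 : ∀ x, 0 ≤ eucNorm (φ x) := fun x => Real.sqrt_nonneg _
  have hgm : Measurable fun x => eucNorm (φ x) := by
    unfold eucNorm
    refine Measurable.sqrt (Finset.measurable_sum _ fun i _ => ?_)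
    exact ((measurable_pi_apply i).comp hφmeas).pow_const 2
  set A : Ω → ℝ≥0∞ := fun ω => ∫⁻ t in Set.Ioc 0 T, ENNReal.ofReal (eucNorm (φ (t, ω))) ^ ν with hA
  have hAm : Measurable A :=
    Measurable.lintegral_prod_left' (f := fun x => ENNReal.ofReal (eucNorm (φ x)) ^ ν)
      (hgm.ennreal_ofReal.pow_const ν)
  have hsec : ∀ ω, Measurable fun t => eucNorm (φ (t, ω)) := fun ω => hgm.comp measurable_prodMk_right
  have ha : ∀ ω, ∫ s in Set.Ioc 0 T, eucNorm (φ (s, ω)) ^ ν = (A ω).toReal := by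
    intro ω
    rw [integral_eq_lintegral_of_nonneg_ae
      (Filter.Eventually.of_forall fun s => Real.rpow_nonneg (hg0 _) _)
      ((hsec ω).pow_const ν).aestronglyMeasurable]
    congr 1
    exact lintegral_congr fun s => (ENNReal.ofReal_rpow_of_nonneg (hg0 _) hν0.le).symm
  simp_rw [ha] at hMcond
  set ξ : Ω → ℝ := fun ω => if (A ω).toReal = 0 then 0 else (A ω).toReal ^ ((qb - ν) / ν) with hξ
  have hξ0 : ∀ ω, 0 ≤ ξ ω := by
    intro ω; simp only [hξ]; split_ifs
    · exact le_rfl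
    · positivity
  have hξm : Measurable ξ :=
    Measurable.ite (hAm.ennreal_toReal (measurableSet_singleton 0)) measurable_const
      (hAm.ennreal_toReal.pow_const _)
  have hAq : ∀ ω, ENNReal.ofReal ((A ω).toReal ^ (qb / ν)) ≤ A ω ^ (qb / ν) := by
    intro ω
    rw [← ENNReal.ofReal_rpow_of_nonneg ENNReal.toReal_nonneg (by positivity)]
    gcongr
    exact ENNReal.ofReal_toReal_le
  have hξle : ∀ ω, ξ ω ≤ 1 + (A ω).toReal ^ (qb / ν) := by
    intro ω
    have h0 : 0 ≤ (A ω).toReal := ENNReal.toReal_nonneg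
    simp only [hξ]; split_ifs
    · positivity
    · rcases le_total (A ω).toReal 1 with h | h
      · have h1 := Real.rpow_le_one h0 h (z := (qb - ν) / ν) (div_nonneg (by linarith) hν0.le)
        have : 0 ≤ (A ω).toReal ^ (qb / ν) := by positivity
        linarith
      · have := Real.rpow_le_rpow_of_exponent_le h (show (qb - ν) / ν ≤ qb / ν by gcongr; linarith)
        linarith
  have hξi : Integrable ξ P := by
    refine ⟨hξm.aestronglyMeasurable, ?_⟩
    rw [hasFiniteIntegral_iff_ofReal (Filter.Eventually.of_forall hξ0)]
    calc ∫⁻ ω, ENNReal.ofReal (ξ ω) ∂P ≤ ∫⁻ ω, (1 + A ω ^ (qb / ν)) ∂P := by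
          refine lintegral_mono fun ω => ?_
          refine (ENNReal.ofReal_le_ofReal (hξle ω)).trans (ENNReal.ofReal_add_le.trans ?_)
          rw [ENNReal.ofReal_one]
          gcongr
          exact hAq ω
      _ < ⊤ := by
          rw [lintegral_add_left measurable_const]
          simpa using hφint
  obtain ⟨Z, hZm, hZM, hZr, hZ1⟩ := aux_Z P ℱ T hT ξ hξ0 hξm hξi M hMnn hMadapted hMrc hMcond
  have hpt : ∀ ω, (∫⁻ t in Set.Ioc 0 T,
        ENNReal.ofReal (M t ω * eucNorm (φ (t, ω)) ^ (ν - 1)) ^ μ) ^ (pb / μ)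
        ≤ Z ω ^ pb * A ω ^ (pb / μ) := by
    intro ω
    have h1 : ∫⁻ t in Set.Ioc 0 T, ENNReal.ofReal (M t ω * eucNorm (φ (t, ω)) ^ (ν - 1)) ^ μ
        ≤ Z ω ^ μ * A ω := by
      rw [hA, ← lintegral_const_mul _ ((hsec ω).ennreal_ofReal.pow_const ν)]
      refine setLIntegral_mono' measurableSet_Ioc fun t ht => ?_
      rw [ENNReal.ofReal_mul (hMnn _ _), ENNReal.mul_rpow_of_nonneg _ _ hμ0.le,
        ← ENNReal.ofReal_rpow_of_nonneg (hg0 _) hν1.le, ← ENNReal.rpow_mul,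
        show (ν - 1) * μ = ν by rw [hμ]; field_simp]
      gcongr
      exact hZM ω t ht
    calc _ ≤ (Z ω ^ μ * A ω) ^ (pb / μ) := by gcongr
      _ = _ := by
        rw [ENNReal.mul_rpow_of_nonneg _ _ (by positivity), ← ENNReal.rpow_mul,
          show μ * (pb / μ) = pb by field_simp]
  have main : ∫⁻ ω, Z ω ^ pb * A ω ^ (pb / μ) ∂P ≤
      ENNReal.ofReal ((qb / ν) ^ (qb / (qb - 1))) * ∫⁻ ω, A ω ^ (qb / ν) ∂P := by
    rcases hνq.eq_or_lt with h | h
    · have hpm : pb / μ = qb / ν := by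
        rw [hpb, hμ, ← h]; field_simp
      rw [← h, div_self hν0.ne', Real.one_rpow, ENNReal.ofReal_one, one_mul, hpm, ← h,
        div_self hν0.ne']
      have h1 : ∀ ω, ξ ω ≤ 1 := by
        intro ω; simp only [hξ, ← h]; split_ifs <;> simp
      refine lintegral_mono_ae ?_
      filter_upwards [hZ1 h1] with ω hω
      calc _ ≤ 1 ^ pb * A ω ^ (1:ℝ) := by gcongr
        _ = _ := by simp
    · have hqν : 0 < qb - ν := by linarith
      have hr : 1 < qb / (qb - ν) := by rw [lt_div_iff₀ hqν]; linarith
      have hZr' := hZr _ hr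
      rw [show qb / (qb - ν) / (qb / (qb - ν) - 1) = qb / ν by
        rw [show qb / (qb - ν) - 1 = ν / (qb - ν) by field_simp; ring]; field_simp] at hZr'
      have hξr : ∫⁻ ω, ENNReal.ofReal (ξ ω) ^ (qb / (qb - ν)) ∂P ≤ ∫⁻ ω, A ω ^ (qb / ν) ∂P := by
        refine lintegral_mono fun ω => ?_
        refine le_trans ?_ (hAq ω)
        rw [ENNReal.ofReal_rpow_of_nonneg (hξ0 ω) (by positivity)]
        refine ENNReal.ofReal_le_ofReal ?_
        simp only [hξ]; split_ifs with h0
        · rw [h0, Real.zero_rpow (by positivity), Real.zero_rpow (by positivity)]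
        · rw [← Real.rpow_mul ENNReal.toReal_nonneg]
          refine le_of_eq ?_
          congr 1; field_simp
      set I := ∫⁻ ω, A ω ^ (qb / ν) ∂P
      have hc : ((qb - 1) / (qb - ν)).HolderConjugate ((qb - 1) / (ν - 1)) := by
        rw [Real.holderConjugate_iff]
        refine ⟨by rw [lt_div_iff₀ hqν]; linarith, ?_⟩
        field_simp; ring
      have hH := ENNReal.lintegral_mul_le_Lp_mul_Lq P hc (f := fun ω => Z ω ^ pb)
        (g := fun ω => A ω ^ (pb / μ)) (by fun_prop) (by fun_prop)
      have hx1 : pb * ((qb - 1) / (qb - ν)) = qb / (qb - ν) := by rw [hpb]; field_simp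
      have hx2 : pb / μ * ((qb - 1) / (ν - 1)) = qb / ν := by rw [hpb, hμ]; field_simp
      simp_rw [← ENNReal.rpow_mul, hx1, hx2] at hH
      refine hH.trans ?_
      calc _ ≤ (ENNReal.ofReal (qb / ν) ^ (qb / (qb - ν)) * I) ^ (1 / ((qb - 1) / (qb - ν)))
            * I ^ (1 / ((qb - 1) / (ν - 1))) := by
            gcongr
            exact hZr'.trans (by gcongr)
        _ = _ := by
            rw [ENNReal.mul_rpow_of_nonneg _ _ (by positivity), mul_assoc,
              ← ENNReal.rpow_add_of_nonneg _ _ (by positivity) (by positivity),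
              ← ENNReal.rpow_mul,
              show 1 / ((qb - 1) / (qb - ν)) + 1 / ((qb - 1) / (ν - 1)) = 1 by field_simp; ring,
              ENNReal.rpow_one,
              show qb / (qb - ν) * (1 / ((qb - 1) / (qb - ν))) = qb / (qb - 1) by field_simp,
              ENNReal.ofReal_rpow_of_nonneg (by positivity) (by positivity)]
  have fin := (lintegral_mono hpt).trans main
  exact ⟨fin, fin.trans_lt (ENNReal.mul_lt_top ENNReal.ofReal_lt_top hφint)⟩
end

section
/- Let T > 0, let (Ω, P) be a probability space, let q̄, ν ∈ (1, ∞), and let φ, ψ : [0,T] × Ω → ℝ^m be jointly measurable with ‖φ‖ := (E[(∫₀^T |φ(t)|^ν dt)^{q̄/ν}])^{1/q̄} < ∞, ‖ψ‖ < ∞ (same norm), and ‖φ‖ ≠ 0. Then the real function δ ↦ ½ (E[(∫₀^T |φ(t)+δψ(t)|^ν dt)^{q̄/ν}])^{2/q̄} is differentiable at δ = 0, and its derivative equals ‖φ‖^{2−q̄} · E[ (∫₀^T |φ(s)|^ν ds)^{(q̄−ν)/ν} · 1_{{∫₀^T |φ(s)|^ν ds ≠ 0}} · ∫₀^T |φ(t)|^{ν−2}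 ⟨φ(t), ψ(t)⟩ dt ]. Moreover, if ‖φ‖ = 0, the derivative at δ = 0 equals 0. -/
open MeasureTheory ENNReal

/-- Euclidean inner product on `Fin k → ℝ`. -/
def eucInner {k : ℕ} (v w : Fin k → ℝ) : ℝ := ∑ i, v i * w i

lemma convex_quot_bound {g : ℝ → ℝ} (hg : ConvexOn ℝ Set.univ g) {d : ℝ} (hd : |d| ≤ 1) :
    |g d - g 0| ≤ (|g 1 - g 0| + |g (-1) - g 0|) * |d| := by
  have key : ∀ {h : ℝ → ℝ}, ConvexOn ℝ Set.univ h → ∀ {d : ℝ}, 0 ≤ d → d ≤ 1 →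
      |h d - h 0| ≤ (|h 1 - h 0| + |h (-1) - h 0|) * d := by
    intro h hh d h0 h1
    have a := hh.2 (Set.mem_univ 0) (Set.mem_univ 1) (sub_nonneg.2 h1) h0 (by ring)
    have b := hh.2 (Set.mem_univ d) (Set.mem_univ (-1))
      (show 0 ≤ 1 / (1 + d) by positivity)
      (show 0 ≤ d / (1 + d) by positivity) (by field_simp)
    have e : (1 / (1 + d)) • d + (d / (1 + d)) • (-1 : ℝ) = 0 := by
      simp only [smul_eq_mul]; field_simp; ring
    rw [e] at b
    simp only [smul_eq_mul, mul_zero, mul_one, zero_add] at a b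
    have b' : (1 + d) * h 0 ≤ h d + d * h (-1) := by
      have := mul_le_mul_of_nonneg_left b (by positivity : 0 ≤ 1 + d)
      have e2 : (1 + d) * (1 / (1 + d) * h d + d / (1 + d) * h (-1)) = h d + d * h (-1) := by
        field_simp
      linarith
    have c1 := mul_le_mul_of_nonneg_left (le_abs_self (h 1 - h 0)) h0
    have c2 := mul_le_mul_of_nonneg_left (le_abs_self (h (-1) - h 0)) h0
    have c3 := mul_nonneg h0 (abs_nonneg (h 1 - h 0))
    have c4 := mul_nonneg h0 (abs_nonneg (h (-1) - h 0))
    rw [abs_le]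
    constructor <;> nlinarith
  rcases le_total 0 d with h | h
  · rw [abs_of_nonneg h] at hd ⊢
    exact key hg h hd
  · rw [abs_of_nonpos h] at hd ⊢
    have hh : ConvexOn ℝ Set.univ (fun x => g (-x)) := by
      simpa [Function.comp_def] using hg.comp_linearMap (-LinearMap.id)
    have := key hh (d := -d) (by linarith) hd
    simp only [neg_neg, neg_zero] at this
    linarith

lemma hasDerivAt_integral_convex {α : Type*} [MeasurableSpace α] {μ : Measure α}
    {f : ℝ → α → ℝ} {f' : α → ℝ}
    (hm : ∀ d, AEStronglyMeasurable (f d) μ)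
    (h0 : Integrable (f 0) μ) (h1 : Integrable (f 1) μ) (h2 : Integrable (f (-1)) μ)
    (hc : ∀ᵐ a ∂μ, ConvexOn ℝ Set.univ (fun d => f d a))
    (hd : ∀ᵐ a ∂μ, HasDerivAt (fun d => f d a) (f' a) 0) :
    HasDerivAt (fun d => ∫ a, f d a ∂μ) (∫ a, f' a ∂μ) 0 := by
  have hf' : AEStronglyMeasurable f' μ := by
    refine aestronglyMeasurable_of_tendsto_ae (ι := ℕ) (u := Filter.atTop)
      (f := fun n a => (1 / ((n : ℝ) + 1))⁻¹ • (f (1 / ((n : ℝ) + 1)) a - f 0 a)) ?_ ?_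
    · intro n
      exact ((hm _).sub (hm _)).const_smul (1 / ((n : ℝ) + 1))⁻¹
    · filter_upwards [hd] with a ha
      rw [hasDerivAt_iff_tendsto_slope_zero] at ha
      simp only [zero_add] at ha
      refine ha.comp (tendsto_nhdsWithin_iff.2 ⟨tendsto_one_div_add_atTop_nhds_zero_nat, ?_⟩)
      filter_upwards with n
      simp only [Set.mem_compl_iff, Set.mem_singleton_iff]
      positivity
  set L : ℝ →L[ℝ] ℝ →L[ℝ] ℝ := ContinuousLinearMap.smulRightL ℝ ℝ ℝ 1
  have hm' : AEStronglyMeasurable (L ∘ f') μ := L.continuous.comp_aestronglyMeasurable hf'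
  obtain ⟨hF'_int, k⟩ := hasFDerivAt_integral_of_dominated_loc_of_lip' (𝕜 := ℝ) (μ := μ)
    (F := f) (F' := L ∘ f') (x₀ := 0) (s := Metric.closedBall 0 1)
    (bound := fun a => |f 1 a - f 0 a| + |f (-1) a - f 0 a|)
    (Metric.closedBall_mem_nhds _ one_pos) (fun x _ => hm x) h0 hm' (by
      filter_upwards [hc] with a ha x hx
      have hx' : |x| ≤ 1 := by simpa using hx
      simpa using convex_quot_bound ha hx') ((h1.sub h0).abs.add (h2.sub h0).abs)
      (hd.mono fun x hx => hx.hasFDerivAt)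
  have hI : Integrable f' μ := by
    rw [← integrable_norm_iff hm'] at hF'_int
    rw [← integrable_norm_iff hf']
    simpa [L, (· ∘ ·)] using! hF'_int
  simp_rw [hasDerivAt_iff_hasFDerivAt]
  simpa only [(· ∘ ·), ContinuousLinearMap.integral_comp_comm _ hI] using! k

lemma convexOn_norm_rpow_line {E : Type*} [NormedAddCommGroup E] [NormedSpace ℝ E] (A B : E)
    {p : ℝ} (hp : 1 ≤ p) : ConvexOn ℝ Set.univ (fun d : ℝ => ‖A + d • B‖ ^ p) := by
  have h : ConvexOn ℝ Set.univ (fun d : ℝ => ‖A + d • B‖) := by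
    have := (convexOn_univ_norm (E := E)).comp_affineMap (AffineMap.lineMap A (A + B) : ℝ →ᵃ[ℝ] E)
    simpa [Function.comp_def, AffineMap.lineMap_apply, add_comm] using this
  refine ConvexOn.comp (g := fun x : ℝ => x ^ p) ?_ h ?_
  · refine (convexOn_rpow hp).subset ?_ ?_
    · rintro _ ⟨d, -, rfl⟩; exact norm_nonneg _
    · have : IsPreconnected ((fun d : ℝ => ‖A + d • B‖) '' Set.univ) :=
        isPreconnected_univ.image _ (by fun_prop)
      exact this.ordConnected.convex
  · rintro _ ⟨d, -, rfl⟩ _ ⟨e, -, rfl⟩ hde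
    exact Real.rpow_le_rpow (norm_nonneg _) hde (by linarith)

lemma hasDerivAt_line {E : Type*} [NormedAddCommGroup E] [InnerProductSpace ℝ E] (x y : E)
    {p : ℝ} (hp : 1 < p) :
    HasDerivAt (fun d : ℝ => ‖x + d • y‖ ^ p) (p * (‖x‖ ^ (p - 2) * inner ℝ x y)) 0 := by
  have h1 : HasDerivAt (fun d : ℝ => x + d • y) y 0 := by
    simpa using ((hasDerivAt_id (0 : ℝ)).smul_const y).const_add x
  have h2 := hasFDerivAt_norm_rpow (x + (0 : ℝ) • y) hp
  have := h2.comp_hasDerivAt (0 : ℝ) h1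
  simpa [Function.comp_def, mul_assoc] using this

lemma lp_package {α E : Type*} [MeasurableSpace α] {μ : Measure α} [NormedAddCommGroup E]
    [InnerProductSpace ℝ E] {ν : ℝ} (hν : 1 < ν) {u v : α → E}
    (hu : MemLp u (ENNReal.ofReal ν) μ) (hv : MemLp v (ENNReal.ofReal ν) μ) :
    ∃ (a : ℝ → ℝ) (b : ℝ), (∀ d, 0 ≤ a d) ∧ 0 ≤ b ∧
      (∀ d, ∫⁻ t, ‖u t + d • v t‖ₑ ^ ν ∂μ = ENNReal.ofReal (a d ^ ν)) ∧
      (∫⁻ t, ‖v t‖ₑ ^ ν ∂μ = ENNReal.ofReal (b ^ ν)) ∧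
      (∫ t, ‖u t‖ ^ ν ∂μ = a 0 ^ ν) ∧
      (∀ p : ℝ, 1 ≤ p → ConvexOn ℝ Set.univ (fun d => a d ^ p)) ∧
      (∀ d, a d ≤ a 0 + |d| * b) ∧
      (a 0 = 0 → ∀ d, a d = |d| * b) ∧
      HasDerivAt (fun d => a d ^ ν) (ν * ∫ t, ‖u t‖ ^ (ν - 2) * inner ℝ (u t) (v t) ∂μ) 0 := by
  have hν0 : 0 < ν := by linarith
  have : Fact ((1 : ℝ≥0∞) ≤ ENNReal.ofReal ν) := ⟨by simpa using hν.le⟩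
  have hp0 : ENNReal.ofReal ν ≠ 0 := by simpa using hν0
  have hpt : ENNReal.ofReal ν ≠ ⊤ := ENNReal.ofReal_ne_top
  have hR : (ENNReal.ofReal ν).toReal = ν := ENNReal.toReal_ofReal hν0.le
  have hn : ∀ {w : α → E} (hw : MemLp w (ENNReal.ofReal ν) μ),
      ∫⁻ t, ‖w t‖ₑ ^ ν ∂μ = ENNReal.ofReal (‖hw.toLp w‖ ^ ν) := by
    intro w hw
    rw [Lp.norm_toLp, ← ENNReal.ofReal_rpow_of_nonneg ENNReal.toReal_nonneg hν0.le,
      ENNReal.ofReal_toReal hw.2.ne, eLpNorm_eq_lintegral_rpow_enorm_toReal hp0 hpt, hR,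
      ← ENNReal.rpow_mul]
    simp [hν0.ne']
  have hi : ∀ {w : α → E} (hw : MemLp w (ENNReal.ofReal ν) μ),
      ∫ t, ‖w t‖ ^ ν ∂μ = ‖hw.toLp w‖ ^ ν := by
    intro w hw
    rw [integral_eq_lintegral_of_nonneg_ae (.of_forall fun _ => by positivity)
      (by have := hw.integrable_norm_rpow hp0 hpt; rw [hR] at this; exact this.1)]
    have : ∀ t, ENNReal.ofReal (‖w t‖ ^ ν) = ‖w t‖ₑ ^ ν := by
      intro t
      rw [← ENNReal.ofReal_rpow_of_nonneg (norm_nonneg _) hν0.le, ofReal_norm]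
    simp_rw [this]
    rw [hn hw, ENNReal.toReal_ofReal (by positivity)]
  have huv : ∀ d : ℝ, MemLp (fun t => u t + d • v t) (ENNReal.ofReal ν) μ := fun d =>
    hu.add (hv.const_smul d)
  have hto : ∀ d : ℝ, (huv d).toLp _ = hu.toLp u + d • hv.toLp v := by
    intro d
    rw [← MemLp.toLp_const_smul, ← MemLp.toLp_add]; rfl
  have hint : ∀ d : ℝ, Integrable (fun t => ‖u t + d • v t‖ ^ ν) μ := by
    intro d
    have := (huv d).integrable_norm_rpow hp0 hpt; rw [hR] at this; exact this
  refine ⟨fun d => ‖hu.toLp u + d • hv.toLp v‖, ‖hv.toLp v‖, fun d => norm_nonneg _,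
    norm_nonneg _, ?_, hn hv, ?_, ?_, ?_, ?_, ?_⟩
  · intro d
    rw [hn (huv d), hto]
  · simpa using hi hu
  · intro p hp; exact convexOn_norm_rpow_line _ _ hp
  · intro d
    refine (norm_add_le _ _).trans ?_
    simp [norm_smul]
  · intro h d
    have : hu.toLp u = 0 := by
      rw [← norm_eq_zero]; simpa only [zero_smul, add_zero] using h
    simp only [this, norm_smul, zero_add, Real.norm_eq_abs]
  · have := hasDerivAt_integral_convex (μ := μ) (f := fun d t => ‖u t + d • v t‖ ^ ν)
      (f' := fun t => ν * (‖u t‖ ^ (ν - 2) * inner ℝ (u t) (v t)))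
      (fun d => (hint d).1) (hint 0) (hint 1) (hint (-1))
      (.of_forall fun t => convexOn_norm_rpow_line _ _ hν.le)
      (.of_forall fun t => hasDerivAt_line _ _ hν)
    rw [integral_const_mul] at this
    refine this.congr_of_eventuallyEq (.of_forall fun d => ?_)
    simp only [hi (huv d), hto]

lemma eucNorm_eq {k : ℕ} (v : Fin k → ℝ) : eucNorm v = ‖(WithLp.toLp 2 v : EuclideanSpace ℝ (Fin k))‖ := by
  simp [eucNorm, EuclideanSpace.norm_eq]

lemma eucInner_eq {k : ℕ} (v w : Fin k → ℝ) : eucInner v w =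
    inner ℝ (WithLp.toLp 2 v : EuclideanSpace ℝ (Fin k)) (WithLp.toLp 2 w) := by
  simp [eucInner, PiLp.inner_apply, mul_comm]

theorem mixed_aux {E : Type*} [NormedAddCommGroup E] [InnerProductSpace ℝ E]
    [MeasurableSpace E] [BorelSpace E] [SecondCountableTopology E]
    {Ω : Type*} [MeasurableSpace Ω] (P : Measure Ω)
    (μ : Measure ℝ) [SFinite μ]
    (ν qb : ℝ) (hq : 1 < qb) (hν : 1 < ν)
    (φ ψ : ℝ × Ω → E) (hφ : Measurable φ) (hψ : Measurable ψ)
    (N : ℝ → ℝ≥0∞)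
    (hN : ∀ δ : ℝ, N δ = ∫⁻ ω, (∫⁻ t, ‖φ (t, ω) + δ • ψ (t, ω)‖ₑ ^ ν ∂μ) ^ (qb / ν) ∂P)
    (hφfin : N 0 < ⊤)
    (hψfin : ∫⁻ ω, (∫⁻ t, ‖ψ (t, ω)‖ₑ ^ ν ∂μ) ^ (qb / ν) ∂P < ⊤) :
    HasDerivAt (fun δ => (N δ).toReal)
      (qb * ∫ ω, (if (∫ s, ‖φ (s, ω)‖ ^ ν ∂μ) = 0 then 0
            else (∫ s, ‖φ (s, ω)‖ ^ ν ∂μ) ^ ((qb - ν) / ν) *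
              ∫ t, ‖φ (t, ω)‖ ^ (ν - 2) * inner ℝ (φ (t, ω)) (ψ (t, ω)) ∂μ) ∂P) 0 ∧
    (N 0 = 0 → ∃ C : ℝ, 0 ≤ C ∧ ∀ δ, (N δ).toReal = |δ| ^ qb * C) := by
  have hν0 : 0 < ν := by linarith
  have hq0 : 0 < qb := by linarith
  have hqν : 0 < qb / ν := by positivity
  set f : ℝ → Ω → ℝ≥0∞ := fun δ ω => (∫⁻ t, ‖φ (t, ω) + δ • ψ (t, ω)‖ₑ ^ ν ∂μ) ^ (qb / ν) with hf
  set g : Ω → ℝ≥0∞ := fun ω => (∫⁻ t, ‖ψ (t, ω)‖ₑ ^ ν ∂μ) ^ (qb / ν) with hg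
  have hfm : ∀ δ, Measurable (f δ) := by
    intro δ
    have : Measurable (fun z : ℝ × Ω => ‖φ z + δ • ψ z‖ₑ ^ ν) := by fun_prop
    exact (this.lintegral_prod_left' (μ := μ)).pow_const _
  have hgm : Measurable g := by
    have : Measurable (fun z : ℝ × Ω => ‖ψ z‖ₑ ^ ν) := by fun_prop
    exact (this.lintegral_prod_left' (μ := μ)).pow_const _
  have hmem : ∀ {w : ℝ × Ω → E} (_ : Measurable w) (ω : Ω),
      (∫⁻ t, ‖w (t, ω)‖ₑ ^ ν ∂μ) ^ (qb / ν) < ⊤ →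
      MemLp (fun t => w (t, ω)) (ENNReal.ofReal ν) μ := by
    intro w hw ω h
    have hp0 : ENNReal.ofReal ν ≠ 0 := by simpa using hν0
    refine ⟨(hw.comp (by fun_prop : Measurable fun t : ℝ => (t, ω))).aestronglyMeasurable, ?_⟩
    rw [eLpNorm_lt_top_iff_lintegral_rpow_enorm_lt_top hp0 ENNReal.ofReal_ne_top,
      ENNReal.toReal_ofReal hν0.le]
    exact (ENNReal.rpow_lt_top_iff_of_pos hqν).1 h
  have hφfin' : ∫⁻ ω, f 0 ω ∂P ≠ ⊤ := by rw [← hN 0]; exact hφfin.ne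
  have hpk : ∀ᵐ ω ∂P, ∃ (a : ℝ → ℝ) (b : ℝ), (∀ d, 0 ≤ a d) ∧ 0 ≤ b ∧
      (∀ d, f d ω = ENNReal.ofReal (a d ^ qb)) ∧ g ω = ENNReal.ofReal (b ^ qb) ∧
      (∫ t, ‖φ (t, ω)‖ ^ ν ∂μ = a 0 ^ ν) ∧
      (∀ p : ℝ, 1 ≤ p → ConvexOn ℝ Set.univ (fun d => a d ^ p)) ∧
      (∀ d, a d ≤ a 0 + |d| * b) ∧
      (a 0 = 0 → ∀ d, a d = |d| * b) ∧
      HasDerivAt (fun d => a d ^ ν)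
        (ν * ∫ t, ‖φ (t, ω)‖ ^ (ν - 2) * inner ℝ (φ (t, ω)) (ψ (t, ω)) ∂μ) 0 := by
    filter_upwards [ae_lt_top (hfm 0) hφfin', ae_lt_top hgm hψfin.ne] with ω h1 h2
    obtain ⟨a, b, ha, hb, h3, h4, h5, h6, h7, h8, h9⟩ := lp_package hν
      (hmem hφ ω (by simpa [hf] using h1)) (hmem hψ ω h2)
    have hpow : ∀ x : ℝ, 0 ≤ x → ENNReal.ofReal (x ^ ν) ^ (qb / ν) = ENNReal.ofReal (x ^ qb) := by
      intro x hx
      rw [ENNReal.ofReal_rpow_of_nonneg (by positivity) hqν.le, ← Real.rpow_mul hx]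
      congr 2; field_simp
    refine ⟨a, b, ha, hb, fun d => ?_, ?_, h5, h6, h7, h8, h9⟩
    · simp only [hf]; rw [h3, hpow _ (ha d)]
    · simp only [hg]; rw [h4, hpow _ hb]
  have hNf : ∀ δ, (N δ).toReal = ∫ ω, (f δ ω).toReal ∂P := by
    intro δ
    rw [hN δ, integral_toReal (hfm δ).aemeasurable]
    filter_upwards [hpk] with ω ⟨a, b, ha, hb, h3, _⟩
    rw [h3]; exact ENNReal.ofReal_lt_top
  have hi0 : Integrable (fun ω => (f 0 ω).toReal) P :=
    integrable_toReal_of_lintegral_ne_top (hfm 0).aemeasurable hφfin'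
  have hig : Integrable (fun ω => (g ω).toReal) P :=
    integrable_toReal_of_lintegral_ne_top hgm.aemeasurable hψfin.ne
  have hi1 : ∀ d : ℝ, |d| = 1 → Integrable (fun ω => (f d ω).toReal) P := by
    intro d hd
    refine ((hi0.add hig).const_mul (2 ^ qb)).mono'
      (hfm d).ennreal_toReal.aestronglyMeasurable ?_
    filter_upwards [hpk] with ω ⟨a, b, ha, hb, h3, h4, h5, h6, h7, h8, h9⟩
    have ha0 := ha 0
    have had := ha d
    simp only [Pi.add_apply]
    rw [h3, h3, h4, ENNReal.toReal_ofReal (by positivity), ENNReal.toReal_ofReal (by positivity),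
      ENNReal.toReal_ofReal (by positivity), Real.norm_of_nonneg (by positivity)]
    have h := h7 d
    rw [hd, one_mul] at h
    calc a d ^ qb ≤ (2 * max (a 0) b) ^ qb := by
          refine Real.rpow_le_rpow had (h.trans ?_) hq0.le
          linarith [le_max_left (a 0) b, le_max_right (a 0) b]
      _ = 2 ^ qb * (max (a 0) b) ^ qb := Real.mul_rpow (by norm_num) (by positivity)
      _ ≤ 2 ^ qb * (a 0 ^ qb + b ^ qb) := by
          gcongr
          have := Real.rpow_nonneg ha0 qb
          have := Real.rpow_nonneg hb qb
          rcases max_choice (a 0) b with h | h <;> rw [h] <;> linarith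
  refine ⟨?_, ?_⟩
  · simp_rw [hNf]
    rw [← integral_const_mul]
    refine hasDerivAt_integral_convex (fun d => (hfm d).ennreal_toReal.aestronglyMeasurable) hi0
      (hi1 1 (by simp)) (hi1 (-1) (by simp)) ?_ ?_
    · filter_upwards [hpk] with ω ⟨a, b, ha, hb, h3, h4, h5, h6, h7, h8, h9⟩
      convert h6 qb hq.le using 2 with d
      rw [h3, ENNReal.toReal_ofReal (Real.rpow_nonneg (ha d) _)]
    · filter_upwards [hpk] with ω ⟨a, b, ha, hb, h3, h4, h5, h6, h7, h8, h9⟩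
      have hfe : (fun d => (f d ω).toReal) = fun d => a d ^ qb := by
        ext d
        rw [h3, ENNReal.toReal_ofReal (Real.rpow_nonneg (ha d) _)]
      rw [hfe, h5]
      split_ifs with h
      · have h0 : a 0 = 0 := (Real.rpow_eq_zero (ha 0) hν0.ne').1 h
        have := (hasDerivAt_abs_rpow 0 hq).mul_const (b ^ qb)
        simp only [mul_zero, zero_mul] at this ⊢
        refine this.congr_of_eventuallyEq (.of_forall fun d => ?_)
        simp only []
        rw [h8 h0, Real.mul_rpow (abs_nonneg _) hb]
      · have := h9.rpow_const (p := qb / ν) (Or.inl h)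
        convert this using 1
        · ext d
          rw [← Real.rpow_mul (ha d)]
          congr 1; field_simp
        · have e : (qb - ν) / ν = qb / ν - 1 := by field_simp
          rw [e]; field_simp
  · intro h0
    refine ⟨∫ ω, (g ω).toReal ∂P, integral_nonneg fun _ => ENNReal.toReal_nonneg, fun δ => ?_⟩
    rw [hNf, ← integral_const_mul]
    rw [hN 0, lintegral_eq_zero_iff (hfm 0)] at h0
    refine integral_congr_ae ?_
    filter_upwards [hpk, h0] with ω ⟨a, b, ha, hb, h3, h4, h5, h6, h7, h8, h9⟩ hz
    have : a 0 = 0 := by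
      rw [h3] at hz
      have h' : a 0 ^ qb ≤ 0 := by simpa using hz
      exact (Real.rpow_eq_zero (ha 0) hq0.ne').1 (le_antisymm h' (Real.rpow_nonneg (ha 0) _))
    rw [h3, h4, h8 this, ENNReal.toReal_ofReal (by positivity), ENNReal.toReal_ofReal (by positivity),
      Real.mul_rpow (abs_nonneg _) hb]

/-- Let `q̄, ν ∈ (1,∞)` and let `φ, ψ` be jointly measurable processes
with finite `L^{q̄}(Ω; L^{ν}(0,T;ℝ^m))` mixed norm; write
`N(δ) = E[(∫₀^T |φ(t)+δψ(t)|^ν dt)^{q̄/ν}]`, so that `‖φ+δψ‖ = N(δ)^{1/q̄}`. If `‖φ‖ ≠ 0`,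
then `δ ↦ ½‖φ+δψ‖²` is differentiable at `δ = 0` with derivative
`‖φ‖^{2−q̄} E[(∫₀^T |φ(s)|^ν ds)^{(q̄−ν)/ν} 1_{∫₀^T |φ(s)|^ν ds ≠ 0}
  ∫₀^T |φ(t)|^{ν−2} ⟨φ(t),ψ(t)⟩ dt]`;
moreover, if `‖φ‖ = 0`, the derivative at `δ = 0` equals `0`. -/
theorem stmt_10 {m : ℕ} {Ω : Type*} [MeasurableSpace Ω] (P : Measure Ω)
    [IsProbabilityMeasure P]
    (T ν qb : ℝ) (hT : 0 < T) (hq : 1 < qb) (hν : 1 < ν)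
    (φ ψ : ℝ × Ω → Fin m → ℝ) (hφ : Measurable φ) (hψ : Measurable ψ)
    (N : ℝ → ℝ≥0∞)
    (hN : ∀ δ : ℝ, N δ = ∫⁻ ω, (∫⁻ t in Set.Ioc 0 T,
        ENNReal.ofReal (eucNorm (φ (t, ω) + δ • ψ (t, ω))) ^ ν) ^ (qb / ν) ∂P)
    (hφfin : N 0 < ⊤)
    (hψfin : ∫⁻ ω, (∫⁻ t in Set.Ioc 0 T,
        ENNReal.ofReal (eucNorm (ψ (t, ω))) ^ ν) ^ (qb / ν) ∂P < ⊤) :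
    (N 0 ≠ 0 →
      HasDerivAt (fun δ : ℝ => (1 / 2 : ℝ) * (N δ).toReal ^ (2 / qb))
        (((N 0).toReal ^ (1 / qb)) ^ (2 - qb) *
          ∫ ω, (if (∫ s in Set.Ioc 0 T, eucNorm (φ (s, ω)) ^ ν) = 0 then 0
            else (∫ s in Set.Ioc 0 T, eucNorm (φ (s, ω)) ^ ν) ^ ((qb - ν) / ν) *
              ∫ t in Set.Ioc 0 T,
                eucNorm (φ (t, ω)) ^ (ν - 2) * eucInner (φ (t, ω)) (ψ (t, ω))) ∂P)
        0)
    ∧ (N 0 = 0 →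
      HasDerivAt (fun δ : ℝ => (1 / 2 : ℝ) * (N δ).toReal ^ (2 / qb)) 0 0) := by
  have hν0 : 0 < ν := by linarith
  have hq0 : 0 < qb := by linarith
  have he : ∀ v : Fin m → ℝ, ENNReal.ofReal (eucNorm v) =
      ‖(WithLp.toLp 2 v : EuclideanSpace ℝ (Fin m))‖ₑ := by
    intro v; rw [eucNorm_eq, ofReal_norm]
  obtain ⟨h1, h2⟩ := mixed_aux (E := EuclideanSpace ℝ (Fin m)) P
    (volume.restrict (Set.Ioc 0 T)) ν qb hq hν
    (fun z => WithLp.toLp 2 (φ z)) (fun z => WithLp.toLp 2 (ψ z)) (by fun_prop) (by fun_prop) N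
    (by simpa only [he, WithLp.toLp_add, WithLp.toLp_smul] using hN) hφfin
    (by simpa only [he] using hψfin)
  simp only [← eucNorm_eq, ← eucInner_eq] at h1
  constructor
  · intro hne
    have hpos : 0 < (N 0).toReal := ENNReal.toReal_pos hne hφfin.ne
    have := (h1.rpow_const (p := 2 / qb) (Or.inl hpos.ne')).const_mul (1 / 2 : ℝ)
    refine this.congr_deriv ?_
    rw [← Real.rpow_mul hpos.le]
    have e : 1 / qb * (2 - qb) = 2 / qb - 1 := by field_simp
    rw [e]; field_simp
  · intro hz
    obtain ⟨C, hC, h⟩ := h2 hz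
    have e : (fun δ : ℝ => (1 / 2 : ℝ) * (N δ).toReal ^ (2 / qb)) =
        fun δ => δ ^ 2 * ((1 / 2 : ℝ) * C ^ (2 / qb)) := by
      ext δ
      rw [h, Real.mul_rpow (by positivity) hC, ← Real.rpow_mul (abs_nonneg _),
        mul_div_cancel₀ _ hq0.ne', Real.rpow_two, sq_abs]
      ring
    rw [e]
    simpa using (hasDerivAt_pow 2 (0 : ℝ)).mul_const ((1 / 2 : ℝ) * C ^ (2 / qb))
end

section
/- Let T > 0, let (Ω, P) be a probability space, let q̄, ν ∈ (1, ∞), and let φ, ψ : [0,T] × Ω → ℝ^m be jointly measurable with ‖φ‖ := (∫₀^T (E|φ(t)|^{q̄})^{ν/q̄} dt)^{1/ν} < ∞, ‖ψ‖ < ∞ (same norm), and ‖φ‖ ≠ 0. Then the real function δ ↦ ½ (∫₀^T (E|φ(t)+δψ(t)|^{q̄})^{ν/q̄} dt)^{2/ν} is differentiable at δ = 0, and its derivative equals ‖φ‖^{2−ν} · ∫₀^T (E|φ(t)|^{q̄})^{(ν−q̄)/q̄} · E[ |φ(t)|^{q̄−2} ⟨φ(t), ψ(t)⟩ ] dt,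 where the factor (E|φ(t)|^{q̄})^{(ν−q̄)/q̄} is interpreted as 0 whenever E|φ(t)|^{q̄} = 0. -/
open MeasureTheory ENNReal

theorem aux_rpow_lip {a b M p : ℝ} (hp : 1 < p) (ha : 0 ≤ a) (hb : 0 ≤ b) (haM : a ≤ M)
    (hbM : b ≤ M) : |a ^ p - b ^ p| ≤ p * M ^ (p - 1) * |a - b| := by
  have h := Convex.norm_image_sub_le_of_norm_hasDerivWithin_le (𝕜 := ℝ) (s := Set.Icc 0 M)
    (f := fun x : ℝ => x ^ p) (f' := fun x => p * x ^ (p - 1)) (C := p * M ^ (p - 1))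
    (x := b) (y := a)
    (fun x _ => (Real.hasDerivAt_rpow_const (Or.inr hp.le)).hasDerivWithinAt)
    (fun x hx => by
      have h1 : 0 ≤ p * x ^ (p - 1) :=
        mul_nonneg (by linarith) (Real.rpow_nonneg hx.1 _)
      rw [Real.norm_of_nonneg h1]
      exact mul_le_mul_of_nonneg_left
        (Real.rpow_le_rpow hx.1 hx.2 (by linarith)) (by linarith))
    (convex_Icc 0 M) ⟨hb, hbM⟩ ⟨ha, haM⟩
  simpa [Real.norm_eq_abs] using h

theorem aux_norm_lip {V : Type*} [NormedAddCommGroup V] [NormedSpace ℝ V] (U W : V) {p : ℝ}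
    (hp : 1 < p) :
    LipschitzOnWith (Real.nnabs (p * 2 ^ (p - 1) * (‖U‖ ^ p + ‖W‖ ^ p)))
      (fun δ : ℝ => ‖U + δ • W‖ ^ p) (Metric.ball 0 1) := by
  apply LipschitzOnWith.of_dist_le_mul
  intro x hx y hy
  have hU := norm_nonneg U
  have hW := norm_nonneg W
  have hb : ∀ z ∈ Metric.ball (0 : ℝ) 1, ‖U + z • W‖ ≤ ‖U‖ + ‖W‖ := by
    intro z hz
    have hz' : ‖z‖ < 1 := by simpa using hz
    calc ‖U + z • W‖ ≤ ‖U‖ + ‖z • W‖ := norm_add_le _ _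
      _ = ‖U‖ + ‖z‖ * ‖W‖ := by rw [norm_smul]
      _ ≤ _ := by nlinarith
  have h1 := aux_rpow_lip hp (norm_nonneg (U + x • W)) (norm_nonneg (U + y • W)) (hb x hx) (hb y hy)
  have h2 : |‖U + x • W‖ - ‖U + y • W‖| ≤ |x - y| * ‖W‖ := by
    refine (abs_norm_sub_norm_le _ _).trans ?_
    rw [add_sub_add_left_eq_sub, ← sub_smul, norm_smul, Real.norm_eq_abs]
  have h3 : (‖U‖ + ‖W‖) ^ p ≤ 2 ^ (p - 1) * (‖U‖ ^ p + ‖W‖ ^ p) := by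
    have := NNReal.rpow_add_le_mul_rpow_add_rpow ‖U‖₊ ‖W‖₊ hp.le
    exact_mod_cast this
  have h4 : (‖U‖ + ‖W‖) ^ (p - 1) * ‖W‖ ≤ (‖U‖ + ‖W‖) ^ p := by
    have h5 : (‖U‖ + ‖W‖) ^ p = (‖U‖ + ‖W‖) ^ (p - 1) * (‖U‖ + ‖W‖) := by
      rcases (add_nonneg hU hW).eq_or_lt with h | h
      · rw [← h, Real.zero_rpow (by linarith)]; simp
      · rw [Real.rpow_sub_one h.ne']; field_simp
    rw [h5]
    exact mul_le_mul_of_nonneg_left (by linarith) (Real.rpow_nonneg (by linarith) _)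
  have hK : 0 ≤ p * 2 ^ (p - 1) * (‖U‖ ^ p + ‖W‖ ^ p) := by
    have : 0 < p := by linarith
    positivity
  rw [Real.coe_nnabs, abs_of_nonneg hK, Real.dist_eq, Real.dist_eq]
  calc _ ≤ p * (‖U‖ + ‖W‖) ^ (p - 1) * (|x - y| * ‖W‖) :=
        h1.trans (mul_le_mul_of_nonneg_left h2 (by
          have : 0 < p := by linarith
          positivity))
    _ = p * ((‖U‖ + ‖W‖) ^ (p - 1) * ‖W‖) * |x - y| := by ring
    _ ≤ p * (2 ^ (p - 1) * (‖U‖ ^ p + ‖W‖ ^ p)) * |x - y| := by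
        apply mul_le_mul_of_nonneg_right _ (abs_nonneg _)
        exact mul_le_mul_of_nonneg_left (h4.trans h3) (by linarith)
    _ = _ := by ring

theorem aux_inner_deriv {Ω E : Type*} [MeasurableSpace Ω] (P : Measure Ω)
    [NormedAddCommGroup E] [InnerProductSpace ℝ E] {q : ℝ} (hq : 1 < q)
    {X Y : Ω → E} (hX : MemLp X (ENNReal.ofReal q) P) (hY : MemLp Y (ENNReal.ofReal q) P) :
    HasDerivAt (fun δ : ℝ => ∫ ω, ‖X ω + δ • Y ω‖ ^ q ∂P)
      (q * ∫ ω, ‖X ω‖ ^ (q - 2) * inner ℝ (X ω) (Y ω) ∂P) 0 := by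
  have hq0 : 0 < q := by linarith
  have hint : ∀ {Z : Ω → E}, MemLp Z (ENNReal.ofReal q) P → Integrable (fun ω => ‖Z ω‖ ^ q) P := by
    intro Z hZ
    have := hZ.integrable_norm_rpow (by simpa using hq0) (by simp)
    simpa [ENNReal.toReal_ofReal hq0.le] using this
  have hmem : ∀ δ : ℝ, MemLp (fun ω => X ω + δ • Y ω) (ENNReal.ofReal q) P :=
    fun δ => hX.add (hY.const_smul δ)
  have key := hasDerivAt_integral_of_dominated_loc_of_lip (μ := P) (𝕜 := ℝ)
    (F := fun (δ : ℝ) ω => ‖X ω + δ • Y ω‖ ^ q) (x₀ := 0) (s := Metric.ball 0 1)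
    (F' := fun ω => q * (‖X ω‖ ^ (q - 2) * inner ℝ (X ω) (Y ω)))
    (bound := fun ω => q * 2 ^ (q - 1) * (‖X ω‖ ^ q + ‖Y ω‖ ^ q))
    (Metric.ball_mem_nhds 0 one_pos)
    (Filter.Eventually.of_forall fun δ => (hint (hmem δ)).aestronglyMeasurable)
    (hint (hmem 0))
    (by
      have h1 := hX.aestronglyMeasurable
      have h2 := hY.aestronglyMeasurable
      have h3 : AEStronglyMeasurable (fun ω => ‖X ω‖ ^ (q - 2)) P :=
        (h1.norm.aemeasurable.pow_const _).aestronglyMeasurable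
      exact (h3.mul (h1.inner h2)).const_mul q)
    (Filter.Eventually.of_forall fun ω => aux_norm_lip (X ω) (Y ω) hq)
    (((hint hX).add (hint hY)).const_mul _)
    (Filter.Eventually.of_forall fun ω => by
      have h1 : HasDerivAt (fun δ : ℝ => X ω + δ • Y ω) (Y ω) 0 := by
        simpa using ((hasDerivAt_id (0 : ℝ)).smul_const (Y ω)).const_add (X ω)
      have h2 := hasFDerivAt_norm_rpow (X ω + (0 : ℝ) • Y ω) hq
      have h3 := h2.comp_hasDerivAt (0 : ℝ) h1
      refine HasDerivAt.congr_deriv h3 ?_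
      simp [mul_assoc])
  rw [← integral_const_mul]
  exact key.2

theorem aux_lint {Ω E : Type*} [MeasurableSpace Ω] (P : Measure Ω)
    [NormedAddCommGroup E] {q : ℝ} (hq : 1 < q)
    {Z : Ω → E} (hZ : MemLp Z (ENNReal.ofReal q) P) :
    ∫⁻ ω, ‖Z ω‖ₑ ^ q ∂P = ENNReal.ofReal (∫ ω, ‖Z ω‖ ^ q ∂P) := by
  have hq0 : 0 < q := by linarith
  have hi := hZ.integrable_norm_rpow (by simpa using hq0) (by simp)
  rw [ENNReal.toReal_ofReal hq0.le] at hi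
  rw [ofReal_integral_eq_lintegral_ofReal hi
    (Filter.Eventually.of_forall fun ω => by positivity)]
  refine lintegral_congr fun ω => ?_
  rw [← ENNReal.ofReal_rpow_of_nonneg (norm_nonneg _) hq0.le, ofReal_norm]

theorem aux_norm_toLp {Ω E : Type*} [MeasurableSpace Ω] (P : Measure Ω)
    [NormedAddCommGroup E] {q ν : ℝ} (hq : 1 < q)
    {Z : Ω → E} (hZ : MemLp Z (ENNReal.ofReal q) P) :
    ((∫⁻ ω, ‖Z ω‖ₑ ^ q ∂P) ^ (ν / q)).toReal = ‖hZ.toLp Z‖ ^ ν := by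
  have hq0 : 0 < q := by linarith
  rw [Lp.norm_toLp, eLpNorm_eq_lintegral_rpow_enorm_toReal (by simpa using hq0) (by simp),
    ENNReal.toReal_ofReal hq0.le, ENNReal.toReal_rpow, ← ENNReal.rpow_mul]
  congr 2
  ring

theorem aux_memLp {Ω E : Type*} [MeasurableSpace Ω] (P : Measure Ω)
    [NormedAddCommGroup E] {q : ℝ} (hq : 1 < q)
    {Z : Ω → E} (hZ : AEStronglyMeasurable Z P) (h : ∫⁻ ω, ‖Z ω‖ₑ ^ q ∂P < ⊤) :
    MemLp Z (ENNReal.ofReal q) P := by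
  have hq0 : 0 < q := by linarith
  refine ⟨hZ, ?_⟩
  rw [eLpNorm_lt_top_iff_lintegral_rpow_enorm_lt_top (by simpa using hq0) (by simp),
    ENNReal.toReal_ofReal hq0.le]
  exact h

theorem aux_G_eq {Ω E : Type*} [MeasurableSpace Ω] (P : Measure Ω)
    [NormedAddCommGroup E] [InnerProductSpace ℝ E] {q ν : ℝ} (hq : 1 < q)
    {X Y : Ω → E} (hX : MemLp X (ENNReal.ofReal q) P) (hY : MemLp Y (ENNReal.ofReal q) P)
    (δ : ℝ) :
    ((∫⁻ ω, ‖X ω + δ • Y ω‖ₑ ^ q ∂P) ^ (ν / q)).toReal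
      = ‖hX.toLp X + δ • hY.toLp Y‖ ^ ν := by
  rw [← MemLp.toLp_const_smul, ← MemLp.toLp_add, ← aux_norm_toLp P hq]
  rfl

theorem aux_G_lip {Ω E : Type*} [MeasurableSpace Ω] (P : Measure Ω)
    [NormedAddCommGroup E] [InnerProductSpace ℝ E] {q ν : ℝ} (hq : 1 < q) (hν : 1 < ν)
    {X Y : Ω → E} (hX : MemLp X (ENNReal.ofReal q) P) (hY : MemLp Y (ENNReal.ofReal q) P) :
    LipschitzOnWith (Real.nnabs (ν * 2 ^ (ν - 1) *
        (((∫⁻ ω, ‖X ω‖ₑ ^ q ∂P) ^ (ν / q)).toReal + ((∫⁻ ω, ‖Y ω‖ₑ ^ q ∂P) ^ (ν / q)).toReal)))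
      (fun δ : ℝ => ((∫⁻ ω, ‖X ω + δ • Y ω‖ₑ ^ q ∂P) ^ (ν / q)).toReal) (Metric.ball 0 1) := by
  have : Fact (1 ≤ ENNReal.ofReal q) := ⟨by simpa using hq.le⟩
  simp only [aux_G_eq P hq hX hY, aux_norm_toLp P hq hX, aux_norm_toLp P hq hY]
  exact aux_norm_lip _ _ hν

theorem aux_G_deriv {Ω E : Type*} [MeasurableSpace Ω] (P : Measure Ω)
    [NormedAddCommGroup E] [InnerProductSpace ℝ E] {q ν : ℝ} (hq : 1 < q) (hν : 1 < ν)
    {X Y : Ω → E} (hX : MemLp X (ENNReal.ofReal q) P) (hY : MemLp Y (ENNReal.ofReal q) P) :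
    HasDerivAt (fun δ : ℝ => ((∫⁻ ω, ‖X ω + δ • Y ω‖ₑ ^ q ∂P) ^ (ν / q)).toReal)
      (ν * ((if ∫⁻ ω, ‖X ω‖ₑ ^ q ∂P = 0 then 0
          else (∫⁻ ω, ‖X ω‖ₑ ^ q ∂P).toReal ^ ((ν - q) / q)) *
        ∫ ω, ‖X ω‖ ^ (q - 2) * inner ℝ (X ω) (Y ω) ∂P)) 0 := by
  have hq0 : 0 < q := by linarith
  have hmem : ∀ δ : ℝ, MemLp (fun ω => X ω + δ • Y ω) (ENNReal.ofReal q) P :=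
    fun δ => hX.add (hY.const_smul δ)
  split_ifs with h0
  · have : Fact (1 ≤ ENNReal.ofReal q) := ⟨by simpa using hq.le⟩
    have hz : ‖hX.toLp X‖ ^ ν = 0 := by
      rw [← aux_norm_toLp P hq, h0, ENNReal.zero_rpow_of_pos (by positivity)]; simp
    have hz' : hX.toLp X = 0 := by
      rw [Real.rpow_eq_zero (norm_nonneg _) (by linarith)] at hz
      exact norm_eq_zero.1 hz
    simp only [aux_G_eq P hq hX hY, hz', zero_add, zero_mul, mul_zero]
    have h1 : ∀ δ : ℝ, ‖δ • hY.toLp Y‖ ^ ν = |δ| ^ ν * ‖hY.toLp Y‖ ^ ν := by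
      intro δ
      rw [norm_smul, Real.mul_rpow (norm_nonneg _) (norm_nonneg _), Real.norm_eq_abs]
    simp only [h1]
    have h2 := (hasDerivAt_abs_rpow (0 : ℝ) hν).mul_const (‖hY.toLp Y‖ ^ ν)
    simpa using h2
  · have h1 := aux_inner_deriv P hq hX hY
    have hF : ∀ δ : ℝ, ((∫⁻ ω, ‖X ω + δ • Y ω‖ₑ ^ q ∂P) ^ (ν / q)).toReal
        = (∫ ω, ‖X ω + δ • Y ω‖ ^ q ∂P) ^ (ν / q) := by
      intro δ
      rw [aux_lint P hq (hmem δ), ← ENNReal.toReal_rpow, ENNReal.toReal_ofReal]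
      exact integral_nonneg fun ω => by positivity
    have hnn : 0 ≤ ∫ ω, ‖X ω‖ ^ q ∂P := integral_nonneg fun ω => by positivity
    rw [aux_lint P hq hX] at h0 ⊢
    have hne : ∫ ω, ‖X ω‖ ^ q ∂P ≠ 0 := by
      intro h; apply h0; simp [h]
    simp only [hF]
    have h2 := h1.rpow_const (p := ν / q) (Or.inl (by simpa using hne))
    convert h2 using 1
    rw [ENNReal.toReal_ofReal hnn]
    have h3 : (ν - q) / q = ν / q - 1 := by field_simp
    simp only [zero_smul, add_zero, h3]
    field_simp

theorem aux_eucNorm {k : ℕ} (v : Fin k → ℝ) : eucNorm v = ‖WithLp.toLp 2 v‖ := by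
  rw [EuclideanSpace.norm_eq]
  simp [eucNorm]

theorem aux_eucInner {k : ℕ} (v w : Fin k → ℝ) :
    eucInner v w = inner ℝ (WithLp.toLp 2 v) (WithLp.toLp 2 w) := by
  simp [eucInner, PiLp.inner_apply, mul_comm]

theorem aux_main {Ω E : Type*} [MeasurableSpace Ω] (P : Measure Ω) [IsProbabilityMeasure P]
    [NormedAddCommGroup E] [InnerProductSpace ℝ E] [MeasurableSpace E] [BorelSpace E]
    [SecondCountableTopology E] {q ν : ℝ} (hq : 1 < q) (hν : 1 < ν) (μ : Measure ℝ)
    {X Y : ℝ × Ω → E} (hX : Measurable X) (hY : Measurable Y)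
    (hXf : ∫⁻ t, (∫⁻ ω, ‖X (t, ω)‖ₑ ^ q ∂P) ^ (ν / q) ∂μ ≠ ⊤)
    (hYf : ∫⁻ t, (∫⁻ ω, ‖Y (t, ω)‖ₑ ^ q ∂P) ^ (ν / q) ∂μ ≠ ⊤) :
    HasDerivAt
      (fun δ : ℝ => (∫⁻ t, (∫⁻ ω, ‖X (t, ω) + δ • Y (t, ω)‖ₑ ^ q ∂P) ^ (ν / q) ∂μ).toReal)
      (ν * ∫ t, (if ∫⁻ ω, ‖X (t, ω)‖ₑ ^ q ∂P = 0 then 0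
          else (∫⁻ ω, ‖X (t, ω)‖ₑ ^ q ∂P).toReal ^ ((ν - q) / q)) *
        ∫ ω, ‖X (t, ω)‖ ^ (q - 2) * inner ℝ (X (t, ω)) (Y (t, ω)) ∂P ∂μ) 0 := by
  have hr : 0 < ν / q := by
    have : 0 < q := by linarith
    have : 0 < ν := by linarith
    positivity
  have hq0 : 0 < q := by linarith
  have hms : ∀ {Z : ℝ × Ω → E}, Measurable Z →
      Measurable (fun t => ∫⁻ ω, ‖Z (t, ω)‖ₑ ^ q ∂P) := by
    intro Z hZ
    exact Measurable.lintegral_prod_right' (f := fun z => ‖Z z‖ₑ ^ q) (hZ.enorm.pow_const q)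
  have hmem : ∀ {Z : ℝ × Ω → E}, Measurable Z →
      ∫⁻ t, (∫⁻ ω, ‖Z (t, ω)‖ₑ ^ q ∂P) ^ (ν / q) ∂μ ≠ ⊤ →
      ∀ᵐ t ∂μ, MemLp (fun ω => Z (t, ω)) (ENNReal.ofReal q) P := by
    intro Z hZ hf
    filter_upwards [ae_lt_top ((hms hZ).pow_const _) hf] with t ht
    refine aux_memLp P hq (hZ.comp measurable_prodMk_left).aestronglyMeasurable ?_
    exact (ENNReal.rpow_lt_top_iff_of_pos hr).1 ht
  have hXY : ∀ᵐ t ∂μ, MemLp (fun ω => X (t, ω)) (ENNReal.ofReal q) P ∧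
      MemLp (fun ω => Y (t, ω)) (ENNReal.ofReal q) P := (hmem hX hXf).and (hmem hY hYf)
  have hmδ : ∀ δ : ℝ, Measurable (fun z => X z + δ • Y z) := fun δ => hX.add (hY.const_smul δ)
  have hN : ∀ δ : ℝ, (∫⁻ t, (∫⁻ ω, ‖X (t, ω) + δ • Y (t, ω)‖ₑ ^ q ∂P) ^ (ν / q) ∂μ).toReal
      = ∫ t, ((∫⁻ ω, ‖X (t, ω) + δ • Y (t, ω)‖ₑ ^ q ∂P) ^ (ν / q)).toReal ∂μ := by
    intro δ
    rw [integral_toReal ((hms (hmδ δ)).pow_const _).aemeasurable]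
    filter_upwards [hXY] with t ht
    rw [aux_lint P hq (Z := fun ω => X (t, ω) + δ • Y (t, ω)) (ht.1.add (ht.2.const_smul δ))]
    exact ENNReal.rpow_lt_top_of_nonneg hr.le ENNReal.ofReal_ne_top
  have hXi := integrable_toReal_of_lintegral_ne_top ((hms hX).pow_const _).aemeasurable hXf
  have hYi := integrable_toReal_of_lintegral_ne_top ((hms hY).pow_const _).aemeasurable hYf
  simp only [hN]
  rw [← integral_const_mul]
  refine (hasDerivAt_integral_of_dominated_loc_of_lip (μ := μ) (𝕜 := ℝ)
    (F := fun (δ : ℝ) t => ((∫⁻ ω, ‖X (t, ω) + δ • Y (t, ω)‖ₑ ^ q ∂P) ^ (ν / q)).toReal)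
    (x₀ := 0) (s := Metric.ball 0 1)
    (bound := fun t => ν * 2 ^ (ν - 1) *
        (((∫⁻ ω, ‖X (t, ω)‖ₑ ^ q ∂P) ^ (ν / q)).toReal
          + ((∫⁻ ω, ‖Y (t, ω)‖ₑ ^ q ∂P) ^ (ν / q)).toReal))
    (Metric.ball_mem_nhds 0 one_pos)
    (Filter.Eventually.of_forall fun δ =>
      ((hms (hmδ δ)).pow_const _).ennreal_toReal.aestronglyMeasurable)
    (by simpa using hXi) ?_ ?_ ((hXi.add hYi).const_mul _) ?_).2
  · have h1 : Measurable (fun t => if ∫⁻ ω, ‖X (t, ω)‖ₑ ^ q ∂P = 0 then (0 : ℝ)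
          else (∫⁻ ω, ‖X (t, ω)‖ₑ ^ q ∂P).toReal ^ ((ν - q) / q)) :=
      Measurable.ite ((hms hX) (measurableSet_singleton 0)) measurable_const
        ((hms hX).ennreal_toReal.pow_const _)
    have h2 : Measurable (fun z => ‖X z‖ ^ (q - 2) * inner ℝ (X z) (Y z)) :=
      (hX.norm.pow_const _).mul (hX.inner hY)
    have h3 := h2.stronglyMeasurable.integral_prod_right' (ν := P)
    exact ((h1.stronglyMeasurable.mul h3).const_mul ν).aestronglyMeasurable
  · filter_upwards [hXY] with t ht
    exact aux_G_lip P hq hν ht.1 ht.2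
  · filter_upwards [hXY] with t ht
    exact aux_G_deriv P hq hν ht.1 ht.2

/-- Let `q̄, ν ∈ (1,∞)` and let `φ, ψ` be jointly measurable processes
with finite `L^{ν}(0,T; L^{q̄}(Ω;ℝ^m))` mixed norm; write
`N(δ) = ∫₀^T (E|φ(t)+δψ(t)|^{q̄})^{ν/q̄} dt`, so that `‖φ+δψ‖ = N(δ)^{1/ν}`. If `‖φ‖ ≠ 0`,
then `δ ↦ ½‖φ+δψ‖²` is differentiable at `δ = 0` with derivative
`‖φ‖^{2−ν} ∫₀^T (E|φ(t)|^{q̄})^{(ν−q̄)/q̄} E[|φ(t)|^{q̄−2}⟨φ(t),ψ(t)⟩] dt`,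
where the factor `(E|φ(t)|^{q̄})^{(ν−q̄)/q̄}` is interpreted as `0` whenever
`E|φ(t)|^{q̄} = 0`. -/
theorem stmt_11 {m : ℕ} {Ω : Type*} [MeasurableSpace Ω] (P : Measure Ω)
    [IsProbabilityMeasure P]
    (T ν qb : ℝ) (hT : 0 < T) (hq : 1 < qb) (hν : 1 < ν)
    (φ ψ : ℝ × Ω → Fin m → ℝ) (hφ : Measurable φ) (hψ : Measurable ψ)
    (c : ℝ → ℝ≥0∞)
    (hc : ∀ t, c t = ∫⁻ ω, ENNReal.ofReal (eucNorm (φ (t, ω))) ^ qb ∂P)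
    (N : ℝ → ℝ≥0∞)
    (hN : ∀ δ : ℝ, N δ = ∫⁻ t in Set.Ioc 0 T,
        (∫⁻ ω, ENNReal.ofReal (eucNorm (φ (t, ω) + δ • ψ (t, ω))) ^ qb ∂P) ^ (ν / qb))
    (hφfin : N 0 < ⊤)
    (hψfin : ∫⁻ t in Set.Ioc 0 T,
        (∫⁻ ω, ENNReal.ofReal (eucNorm (ψ (t, ω))) ^ qb ∂P) ^ (ν / qb) < ⊤)
    (hφne : N 0 ≠ 0) :
    HasDerivAt (fun δ : ℝ => (1 / 2 : ℝ) * (N δ).toReal ^ (2 / ν))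
      (((N 0).toReal ^ (1 / ν)) ^ (2 - ν) *
        ∫ t in Set.Ioc 0 T,
          (if c t = 0 then 0 else (c t).toReal ^ ((ν - qb) / qb)) *
            ∫ ω, eucNorm (φ (t, ω)) ^ (qb - 2) * eucInner (φ (t, ω)) (ψ (t, ω)) ∂P)
      0 := by
  have hm : Measurable (WithLp.toLp 2 : (Fin m → ℝ) → EuclideanSpace ℝ (Fin m)) := by fun_prop
  have hν0 : 0 < ν := by linarith
  have hen : ∀ v : Fin m → ℝ, ENNReal.ofReal (eucNorm v)
      = ‖(WithLp.toLp 2 v : EuclideanSpace ℝ (Fin m))‖ₑ := by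
    intro v
    rw [aux_eucNorm, ofReal_norm]
  have hN0 : N 0 = ∫⁻ t in Set.Ioc 0 T, (∫⁻ ω, ENNReal.ofReal (eucNorm (φ (t, ω))) ^ qb ∂P)
      ^ (ν / qb) := by
    rw [hN]; simp
  have hXf := hφfin.ne
  rw [hN0] at hXf
  have hYf := hψfin.ne
  simp only [hen] at hXf hYf
  have key := aux_main P hq hν (volume.restrict (Set.Ioc 0 T)) (hm.comp hφ) (hm.comp hψ) hXf hYf
  have hNf : (fun δ : ℝ => (N δ).toReal) = fun δ : ℝ => (∫⁻ t in Set.Ioc 0 T,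
      (∫⁻ ω, ‖(WithLp.toLp 2 ∘ φ) (t, ω) + δ • (WithLp.toLp 2 ∘ ψ) (t, ω)‖ₑ ^ qb ∂P)
        ^ (ν / qb)).toReal := by
    funext δ
    rw [hN]
    simp only [hen]
    rfl
  rw [← hNf] at key
  have hpos : 0 < (N 0).toReal := ENNReal.toReal_pos hφne hφfin.ne
  have h2 := (key.rpow_const (p := 2 / ν) (Or.inl hpos.ne')).const_mul (1 / 2 : ℝ)
  refine h2.congr_deriv ?_
  simp only [hc, aux_eucNorm, ofReal_norm, aux_eucInner, Function.comp]
  have h3 : ((N 0).toReal ^ (1 / ν)) ^ (2 - ν) = (N 0).toReal ^ (2 / ν - 1) := by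
    rw [← Real.rpow_mul hpos.le]
    congr 1
    field_simp
  rw [h3]
  field_simp
end
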